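/- arXiv:2310.15822 — 2 statements merged into one kernel-verified Lean document; each statement's English description precedes it below -/
import Mathlib

section
/- Let A be a commutative ring with 2 ∈ A^× and let (R,*,D,P) be a symplectic Cayley–Hamilton A-algebra of degree 2d such that R is finitely generated as an A-algebra. Then R is finitely generated as an A-module. -/
/-!
STATEMENT 8: a symplectic Cayley–Hamilton `A`-algebra of degree `2d` (with `2 ∈ A^×`) that
is finitely generated as an `A`-algebra is finitely generated as an `A`-module.
-/

open scoped TensorProduct

universe u

namespace SympDet

/-! ### Polynomial laws valued in the base ring -/

variable (A : Type u) [CommRing A]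

/-- An `A`-polynomial law on the `A`-module `M` with values in `A`: a family of maps
`M ⊗[A] B → B` (written `B ⊗[A] M → B`), one for each commutative `A`-algebra `B`,
natural in `B`. -/
structure PolyLaw (M : Type u) [AddCommGroup M] [Module A M] : Type (u + 1) where
  toFun : ∀ (B : Type u) [CommRing B] [Algebra A B], B ⊗[A] M → B
  natural : ∀ (B B' : Type u) [CommRing B] [Algebra A B] [CommRing B'] [Algebra A B']
      (f : B →ₐ[A] B') (x : B ⊗[A] M),
      f (toFun B x) = toFun B' (LinearMap.rTensor M f.toLinearMap x)

variable {A}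

/-- Homogeneity of degree `n` of a polynomial law. -/
def PolyLaw.IsHomog {M : Type u} [AddCommGroup M] [Module A M] (P : PolyLaw A M) (n : ℕ) : Prop :=
  ∀ (B : Type u) [CommRing B] [Algebra A B] (b : B) (x : B ⊗[A] M),
    P.toFun B (b • x) = b ^ n * P.toFun B x

/-- The kernel of a polynomial law. -/
def PolyLaw.lawKer {M : Type u} [AddCommGroup M] [Module A M] (P : PolyLaw A M) : Set M :=
  {m | ∀ (B : Type u) [CommRing B] [Algebra A B] (b : B) (y : B ⊗[A] M),
    P.toFun B (b ⊗ₜ[A] m + y) = P.toFun B y}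

/-- Multiplicativity of a polynomial law on an `A`-algebra `R`. -/
def PolyLaw.IsMult {R : Type u} [Ring R] [Algebra A R] (D : PolyLaw A R) : Prop :=
  ∀ (B : Type u) [CommRing B] [Algebra A B],
    D.toFun B 1 = 1 ∧ ∀ x y : B ⊗[A] R, D.toFun B (x * y) = D.toFun B x * D.toFun B y

/-! ### Involutive algebras -/

variable (A) in
/-- An involutive `A`-algebra structure: an `A`-linear involutive anti-automorphism. -/
structure InvAlg (R : Type u) [Ring R] [Algebra A R] : Type u where
  star : R →ₗ[A] R
  star_one : star 1 = 1
  star_mul : ∀ x y : R, star (x * y) = star y * star x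
  star_star : ∀ x : R, star (star x) = x

variable {R : Type u} [Ring R] [Algebra A R]

/-- The submodule of symmetric elements `R⁺`. -/
def InvAlg.plus (s : InvAlg A R) : Submodule A R :=
  LinearMap.ker (s.star - LinearMap.id)

theorem InvAlg.one_mem_plus (s : InvAlg A R) : (1 : R) ∈ s.plus := by
  simp [InvAlg.plus, LinearMap.mem_ker, LinearMap.sub_apply, s.star_one]

/-- `1` as an element of `R⁺`. -/
def InvAlg.onePlus (s : InvAlg A R) : s.plus := ⟨1, s.one_mem_plus⟩

/-- The inclusion `B ⊗[A] R⁺ → B ⊗[A] R`. -/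
noncomputable def InvAlg.incl (s : InvAlg A R) (B : Type u) [CommRing B] [Algebra A B] :
    B ⊗[A] ↥s.plus →ₗ[A] B ⊗[A] R :=
  LinearMap.lTensor B s.plus.subtype

/-- A weak symplectic determinant law of dimension `2d`. -/
structure IsWeakSympDet (s : InvAlg A R) (d : ℕ) (D : PolyLaw A R) (P : PolyLaw A ↥s.plus) :
    Prop where
  mult : D.IsMult
  homog : D.IsHomog (2 * d)
  starInv : ∀ (B : Type u) [CommRing B] [Algebra A B] (x : B ⊗[A] R),
      D.toFun B (LinearMap.lTensor B s.star x) = D.toFun B x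
  homogP : P.IsHomog d
  sq : ∀ (B : Type u) [CommRing B] [Algebra A B] (x : B ⊗[A] ↥s.plus),
      P.toFun B x ^ 2 = D.toFun B (s.incl B x)
  one : P.toFun A ((1 : A) ⊗ₜ[A] s.onePlus) = 1

/-! ### Characteristic polynomials and the Cayley-Hamilton ideal -/

/-- The characteristic polynomial `χ^P(x, t) = P_{B[t]}(t·e - x)` of a polynomial law,
relative to a marked element `e` (the unit). -/
noncomputable def chPoly {M : Type u} [AddCommGroup M] [Module A M] (P : PolyLaw A M) (e : M)
    (B : Type u) [CommRing B] [Algebra A B] (x : B ⊗[A] M) : Polynomial B :=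
  P.toFun (Polynomial B)
    ((Polynomial.X : Polynomial B) ⊗ₜ[A] e -
      LinearMap.rTensor M (IsScalarTower.toAlgHom A B (Polynomial B)).toLinearMap x)

/-- The coefficient `(-1)^i Λ_i` of `t^(n-i)` in the characteristic polynomial, with the
convention that it vanishes for `i > n`. -/
noncomputable def chCoeff {M : Type u} [AddCommGroup M] [Module A M] (P : PolyLaw A M) (e : M)
    (n i : ℕ) (B : Type u) [CommRing B] [Algebra A B] (x : B ⊗[A] M) : B :=
  if i ≤ n then (-1 : B) ^ i * (chPoly P e B x).coeff (n - i) else 0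

/-- `χ^P(x, x)`: the characteristic polynomial of `x ∈ (B ⊗ R)⁺` evaluated at `x` itself. -/
noncomputable def chEval (s : InvAlg A R) (P : PolyLaw A ↥s.plus) (B : Type u) [CommRing B]
    [Algebra A B] (x : B ⊗[A] ↥s.plus) : B ⊗[A] R :=
  Polynomial.aeval (s.incl B x) (chPoly P s.onePlus B x)

/-- The `A`-linear coefficient extraction map on multivariate polynomials. -/
noncomputable def mvLcoeff {n : ℕ} (α : Fin n →₀ ℕ) : MvPolynomial (Fin n) A →ₗ[A] A where
  toFun p := MvPolynomial.coeff α p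
  map_add' p q := MvPolynomial.coeff_add α p q
  map_smul' c p := MvPolynomial.coeff_smul α c p

/-- Extracting the coefficient of the monomial `t^α` from an element of `R[t_1,…,t_n]`. -/
noncomputable def tensorCoeff {n : ℕ} (α : Fin n →₀ ℕ) :
    (MvPolynomial (Fin n) A) ⊗[A] R →ₗ[A] R :=
  (TensorProduct.lid A R).toLinearMap ∘ₗ LinearMap.rTensor R (mvLcoeff α)

/-- The generators `χ^P_α(r_1, …, r_n)` of the Cayley–Hamilton ideal of `P`:
the multihomogeneous coefficients of `χ^P(t_1 r_1 + ⋯ + t_n r_n, t_1 r_1 + ⋯ + t_n r_n)`. -/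
def chGen (s : InvAlg A R) (P : PolyLaw A ↥s.plus) : Set R :=
  {y | ∃ (n : ℕ) (r : Fin n → ↥s.plus) (α : Fin n →₀ ℕ),
    y = tensorCoeff α
      (chEval s P (MvPolynomial (Fin n) A)
        (∑ i : Fin n, (MvPolynomial.X i : MvPolynomial (Fin n) A) ⊗ₜ[A] r i))}

/-- The Cayley–Hamilton ideal `CH(P)`: the two-sided ideal generated by the
multihomogeneous coefficients of the characteristic polynomials. -/
def chIdeal (s : InvAlg A R) (P : PolyLaw A ↥s.plus) : TwoSidedIdeal R :=
  TwoSidedIdeal.span (chGen s P)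

/-- A symplectic determinant law of dimension `2d`: a weak symplectic determinant law
such that `CH(P) ⊆ ker(D)`. -/
def IsSympDet (s : InvAlg A R) (d : ℕ) (D : PolyLaw A R) (P : PolyLaw A ↥s.plus) : Prop :=
  IsWeakSympDet s d D P ∧ ∀ y ∈ chIdeal s P, y ∈ D.lawKer

/-- A symplectic Cayley–Hamilton algebra of degree `2d`: a symplectic determinant law
such that `χ^P(r, r) = 0` for all symmetric `r` over all base extensions. -/
def IsSympCH (s : InvAlg A R) (d : ℕ) (D : PolyLaw A R) (P : PolyLaw A ↥s.plus) : Prop :=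
  IsSympDet s d D P ∧
    ∀ (B : Type u) [CommRing B] [Algebra A B] (x : B ⊗[A] ↥s.plus), chEval s P B x = 0

end SympDet


theorem aux_semiprime {Q : Type*} [Ring Q] (hsp : ∀ x : Q, (∀ t, x * t * x = 0) → x = 0) :
    ∀ (n : ℕ) (s : Q), (∀ y, (s * y) ^ n * s = 0) → s = 0 := by
  have comm : ∀ (u w : Q) (k : ℕ), (u * w) ^ k * u = u * (w * u) ^ k := by
    intro u w k
    induction k with
    | zero => simp
    | succ k ih => rw [pow_succ', mul_assoc, ih, pow_succ' (w * u)]; simp only [mul_assoc]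
  intro n
  induction n with
  | zero => intro s h; simpa using h 0
  | succ n ih =>
    rcases n with _ | n
    · intro s h
      exact hsp s (fun t => by simpa using h t)
    · intro s h
      apply ih
      intro a
      have key : ∀ w, ((s * a) ^ (n + 1) * s * w) ^ (n + 1) * ((s * a) ^ (n + 1) * s) = 0 := by
        intro w
        set u := (s * a) ^ (n + 1) * s with hu
        set p := (s * a) ^ n * s with hp
        set v := w * u with hv
        have hv0 : v * a * s = 0 := by
          have := h a
          rw [pow_succ] at this
          rw [hv, hu]
          calc w * ((s * a) ^ (n + 1) * s) * a * s
              = w * ((s * a) ^ (n + 1) * (s * a) * s) := by simp only [mul_assoc]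
            _ = 0 := by rw [this, mul_zero]
        set z := w * (s * a) ^ (n + 1) with hz
        have hzs : z * s = v := by rw [hz, hv, hu, mul_assoc]
        set F : ℕ → Q := fun k => (s * (a + z)) ^ k * s with hF
        have hFas : ∀ k, F k * a * s = (s * a) ^ (k + 1) * s ∧
            F (k + 1) = F k * v + (s * a) ^ (k + 1) * s := by
          have st : ∀ k, F (k + 1) = F k * v + F k * a * s := by
            intro k
            simp only [hF, pow_succ]
            rw [← hzs]
            simp only [mul_add, add_mul, mul_assoc]
            abel
          intro k
          induction k with
          | zero =>
            have : F 0 * a * s = (s * a) ^ (0 + 1) * s := by simp [hF]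
            exact ⟨this, by rw [st, this]⟩
          | succ k ih2 =>
            have : F (k + 1) * a * s = (s * a) ^ (k + 1 + 1) * s := by
              rw [ih2.2, add_mul, add_mul, mul_assoc (F k), mul_assoc (F k), hv0, pow_succ _ (k + 1)]
              simp only [mul_assoc, mul_zero, zero_add]
            exact ⟨this, by rw [st, this]⟩
        have hvN : v ^ (n + 3) = 0 := by
          have e : ∀ k, v ^ (k + 1) = w * ((u * w) ^ k * u) := by
            intro k
            rw [comm, pow_succ', hv]; simp only [mul_assoc]
          rw [e (n + 2)]
          have h1 := h ((a * s) ^ (n + 1) * w)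
          have h2 : u = s * (a * s) ^ (n + 1) := by rw [hu, comm]
          have : (u * w) ^ (n + 2) * u = 0 := by
            rw [h2]
            calc _ = (s * ((a * s) ^ (n + 1) * w)) ^ (n + 1 + 1) * s * (a * s) ^ (n + 1) := by
                  simp only [mul_assoc]
              _ = 0 := by rw [h1, zero_mul]
          rw [this, mul_zero]
        have hFn : F n * v ^ (n + 2) = p * v ^ (n + 2) := by
          rcases n with _ | n
          · simp [hF, hp]
          · rw [(hFas n).2, add_mul, mul_assoc (F n), ← pow_succ', hvN, mul_zero, zero_add]
        have hfin : (1 + p * w) * (u * v ^ (n + 1)) = 0 := by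
          have h0 : F (n + 1 + 1) = 0 := h (a + z)
          rw [(hFas (n + 1)).2, h a, add_zero, (hFas n).2] at h0
          have h3 : (F n * v + u) * v * v ^ n = 0 := by rw [h0, zero_mul]
          have h4 : F n * v ^ (n + 2) + u * v ^ (n + 1) = 0 := by
            rw [← h3, mul_assoc _ v, ← pow_succ', add_mul, mul_assoc (F n), ← pow_succ']
          rw [hFn, pow_succ' v (n + 1)] at h4
          rw [← h4, hv]
          simp only [add_mul, one_mul, mul_assoc]
          abel
        have hnil : IsNilpotent (p * w) := by
          refine ⟨n + 3, ?_⟩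
          have h1 := h ((a * s) ^ n * w)
          have h2 : p = s * (a * s) ^ n := by rw [hp, comm]
          rw [pow_succ, h2]
          calc _ = (s * ((a * s) ^ n * w)) ^ (n + 1 + 1) * s * ((a * s) ^ n * w) := by
                simp only [mul_assoc]
            _ = 0 := by rw [h1, zero_mul]
        rw [comm]
        exact (hnil.isUnit_one_add.mul_right_eq_zero).1 hfin
      exact ih _ key

theorem aux_nilpotent {K T : Type*} [CommRing K] [Ring T] [Algebra K T] (h2 : IsUnit (2 : K))
    (σ : T →ₗ[K] T) (σ1 : σ 1 = 1) (σmul : ∀ x y, σ (x * y) = σ y * σ x)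
    (σσ : ∀ x, σ (σ x) = x) (I0 M W : Submodule K T)
    (hM : ∀ x ∈ M, (∀ t, t * x ∈ M ∧ x * t ∈ M) ∧ σ x ∈ M)
    (hI0 : ∀ x ∈ I0, (∀ t, t * x ∈ I0 ∧ x * t ∈ I0) ∧ σ x ∈ I0)
    (hW : W.FG) (hWM : W ≤ M) (d : ℕ) (hd : ∀ r ∈ M, σ r = r → r ^ d ∈ I0) :
    ∃ N, W ^ N ≤ I0 := by
  by_contra! hcon
  obtain ⟨I, hle, hmax⟩ := zorn_le_nonempty₀
    {J : Submodule K T | (∀ x ∈ J, (∀ t, t * x ∈ J ∧ x * t ∈ J) ∧ σ x ∈ J) ∧ ∀ N, ¬ W ^ N ≤ J}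
    (by
      intro c hc hch y hy
      have hne : c.Nonempty := ⟨y, hy⟩
      have hdir := hch.directedOn
      refine ⟨sSup c, ⟨?_, ?_⟩, fun z hz => le_sSup hz⟩
      · intro x hx
        obtain ⟨J, hJ, hxJ⟩ := (Submodule.mem_sSup_of_directed hne hdir).1 hx
        have hJle : J ≤ sSup c := le_sSup hJ
        have := (hc hJ).1 x hxJ
        exact ⟨fun t => ⟨hJle (this.1 t).1, hJle (this.1 t).2⟩, hJle this.2⟩
      · intro N hN
        have hcpt := (Submodule.fg_iff_compact (W ^ N)).1 (hW.pow N)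
        rw [CompleteLattice.isCompactElement_iff_le_of_directed_sSup_le] at hcpt
        obtain ⟨J, hJ, hJ2⟩ := hcpt c hne hdir hN
        exact (hc hJ).2 N hJ2)
    I0 ⟨hI0, hcon⟩
  obtain ⟨⟨hI, hIN⟩, hImax⟩ := hmax
  have hIl : ∀ t x, x ∈ I → t * x ∈ I := fun t x hx => ((hI x hx).1 t).1
  have hIr : ∀ t x, x ∈ I → x * t ∈ I := fun t x hx => ((hI x hx).1 t).2
  have hIσ : ∀ x, x ∈ I → σ x ∈ I := fun x hx => (hI x hx).2
  -- semiprimeness for star-ideals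
  have ha : ∀ J : Submodule K T, I ≤ J → (∀ x ∈ J, (∀ t, t * x ∈ J ∧ x * t ∈ J) ∧ σ x ∈ J) →
      (∀ a ∈ J, ∀ b ∈ J, ∀ c ∈ J, a * b * c ∈ I) → J ≤ I := by
    intro J hIJ hJ hJ3
    apply hImax _ hIJ
    refine ⟨hJ, fun N hN => hIN (N + N + N) ?_⟩
    rw [pow_add, pow_add]
    refine (mul_le_mul' (mul_le_mul' hN hN) hN).trans ?_
    rw [Submodule.mul_le]
    intro m hm z hz
    suffices H : J * J ≤ I.comap (LinearMap.mulRight K z) from H hm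
    rw [Submodule.mul_le]
    intro x hx y hy
    exact hJ3 x hx y hy z hz
  have hb : ∀ x, (∀ t, x * t * x ∈ I) → x ∈ I := by
    intro x hx
    set C : Submodule K T := ⊤ * Submodule.span K {x} * ⊤ with hC
    have hCC : C * C ≤ I := by
      have h1 : Submodule.span K {x} * (⊤ * Submodule.span K {x}) ≤ I := by
        rw [Submodule.mul_le]
        intro m hm n hn
        obtain ⟨k, rfl⟩ := Submodule.mem_span_singleton.1 hm
        suffices H : ⊤ * Submodule.span K {x} ≤ I.comap (LinearMap.mulLeft K (k • x)) from H hn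
        rw [Submodule.mul_le]
        intro t _ n hn
        obtain ⟨k', rfl⟩ := Submodule.mem_span_singleton.1 hn
        have := I.smul_mem (k' * k) (hx t)
        simpa [mul_smul, mul_assoc] using this
      have h2 : C * C = ⊤ * (Submodule.span K {x} * ((⊤ * ⊤) * Submodule.span K {x})) * ⊤ := by
        rw [hC]; simp only [mul_assoc]
      have h3 : (⊤ : Submodule K T) * ⊤ ≤ ⊤ := le_top
      rw [h2]
      refine (mul_le_mul' (mul_le_mul' le_rfl ((mul_le_mul' le_rfl
        (mul_le_mul' h3 le_rfl)).trans h1)) le_rfl).trans ?_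
      rw [Submodule.mul_le]
      intro m hm n _
      apply hIr
      revert m
      rw [← SetLike.le_def, Submodule.mul_le]
      intro m _ n hn
      exact hIl _ _ hn
    set N := I ⊔ C with hN
    have hCl : ∀ t, ∀ y ∈ C, t * y ∈ C := by
      intro t y hy
      have : (⊤ : Submodule K T) * C ≤ C := by
        rw [hC, ← mul_assoc, ← mul_assoc]
        exact mul_le_mul' (mul_le_mul' le_top le_rfl) le_rfl
      exact this (Submodule.mul_mem_mul trivial hy)
    have hCr : ∀ t, ∀ y ∈ C, y * t ∈ C := by
      intro t y hy
      have : C * (⊤ : Submodule K T) ≤ C := by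
        rw [hC, mul_assoc]
        exact mul_le_mul' le_rfl le_top
      exact this (Submodule.mul_mem_mul hy trivial)
    have hNl : ∀ t, ∀ y ∈ N, t * y ∈ N := by
      intro t y hy
      obtain ⟨i, hi, c, hc, rfl⟩ := Submodule.mem_sup.1 hy
      rw [mul_add]
      exact Submodule.add_mem_sup (hIl _ _ hi) (hCl _ _ hc)
    have hNr : ∀ t, ∀ y ∈ N, y * t ∈ N := by
      intro t y hy
      obtain ⟨i, hi, c, hc, rfl⟩ := Submodule.mem_sup.1 hy
      rw [add_mul]
      exact Submodule.add_mem_sup (hIr _ _ hi) (hCr _ _ hc)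
    have hNN : ∀ y ∈ N, ∀ z ∈ N, y * z ∈ I := by
      intro y hy z hz
      obtain ⟨i, hi, c, hc, rfl⟩ := Submodule.mem_sup.1 hy
      obtain ⟨i', hi', c', hc', rfl⟩ := Submodule.mem_sup.1 hz
      rw [add_mul, mul_add c]
      exact I.add_mem (hIr _ _ hi) (I.add_mem (hIl _ _ hi') (hCC (Submodule.mul_mem_mul hc hc')))
    have hxN : x ∈ N := by
      apply Submodule.mem_sup_right
      have : (1 : T) * x * 1 ∈ C := Submodule.mul_mem_mul (Submodule.mul_mem_mul trivial
        (Submodule.mem_span_singleton_self x)) trivial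
      simpa using this
    -- the star-ideal `N + σ N`
    set N' := N.map σ with hN'
    have hN'mem : ∀ y, y ∈ N' ↔ σ y ∈ N := by
      intro y
      constructor
      · rintro ⟨z, hz, rfl⟩
        rw [σσ]; exact hz
      · intro h
        exact ⟨σ y, h, σσ y⟩
    have hN'l : ∀ t, ∀ y ∈ N', t * y ∈ N' := by
      intro t y hy
      rw [hN'mem] at hy ⊢
      rw [σmul]; exact hNr _ _ hy
    have hN'r : ∀ t, ∀ y ∈ N', y * t ∈ N' := by
      intro t y hy
      rw [hN'mem] at hy ⊢
      rw [σmul]; exact hNl _ _ hy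
    have hN'N' : ∀ y ∈ N', ∀ z ∈ N', y * z ∈ I := by
      intro y hy z hz
      rw [hN'mem] at hy hz
      have := hIσ _ (hNN _ hz _ hy)
      rwa [σmul, σσ, σσ] at this
    have hJ : N ⊔ N' ≤ I := by
      apply ha
      · exact le_sup_left.trans le_sup_left
      · intro y hy
        obtain ⟨a, haN, b, hbN, rfl⟩ := Submodule.mem_sup.1 hy
        refine ⟨fun t => ⟨?_, ?_⟩, ?_⟩
        · rw [mul_add]
          exact Submodule.add_mem_sup (hNl _ _ haN) (hN'l _ _ hbN)
        · rw [add_mul]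
          exact Submodule.add_mem_sup (hNr _ _ haN) (hN'r _ _ hbN)
        · rw [map_add, add_comm]
          refine Submodule.add_mem_sup ((hN'mem b).1 hbN) ?_
          rw [hN'mem, σσ]; exact haN
      · intro y1 hy1 y2 hy2 y3 hy3
        obtain ⟨a, ha1, a', ha', rfl⟩ := Submodule.mem_sup.1 hy1
        obtain ⟨b, hb1, b', hb', rfl⟩ := Submodule.mem_sup.1 hy2
        obtain ⟨c, hc1, c', hc', rfl⟩ := Submodule.mem_sup.1 hy3
        have e1 := hIr (c + c') _ (hNN a ha1 b hb1)
        have e2 := hIr (c + c') _ (hN'N' a' ha' b' hb')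
        have e3 := hNN a ha1 _ (hNl b' c hc1)
        have e4 := hIl a _ (hN'N' b' hb' c' hc')
        have e5 := hIl a' _ (hNN b hb1 c hc1)
        have e6 := hN'N' a' ha' _ (hN'l b c' hc')
        have := I.add_mem e1 (I.add_mem e2 (I.add_mem e3 (I.add_mem e4 (I.add_mem e5 e6))))
        convert this using 1
        noncomm_ring
    exact hJ (Submodule.mem_sup_left hxN)
  -- Levitzki
  have hlev : ∀ (n : ℕ) (s : T), (∀ y, (s * y) ^ n * s ∈ I) → s ∈ I := by
    let I' : TwoSidedIdeal T := TwoSidedIdeal.mk' (I : Set T) I.zero_mem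
      (fun h h' => I.add_mem h h') (fun h => I.neg_mem h) (fun h => hIl _ _ h)
      (fun h => hIr _ _ h)
    have hmem : ∀ x : T, (x : I'.ringCon.Quotient) = 0 ↔ x ∈ I := by
      intro x
      have h1 := TwoSidedIdeal.mem_mk' (I : Set T) I.zero_mem
        (fun h h' => I.add_mem h h') (fun h => I.neg_mem h) (fun h => hIl _ _ h)
        (fun h => hIr _ _ h) x
      have h3 : x ∈ I' ↔ x ∈ I := h1
      rw [← h3, TwoSidedIdeal.mem_iff]
      exact RingCon.eq _
    intro n s h
    rw [← hmem]
    refine aux_semiprime ?_ n _ ?_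
    · intro x
      induction x using Quotient.inductionOn' with | _ x => ?_
      intro hx
      refine (hmem x).2 (hb x fun t => (hmem _).1 ?_)
      exact hx t
    · intro y
      induction y using Quotient.inductionOn' with | _ y => ?_
      exact (hmem _).2 (h y)
  -- there is a symmetric element of `M` outside `I`
  have hc : ∃ r ∈ M, σ r = r ∧ r ∉ I := by
    by_contra! hall
    have h1 : ∀ x ∈ M, x + σ x ∈ I := fun x hx =>
      hall _ (M.add_mem hx (hM x hx).2) (by rw [map_add, σσ, add_comm])
    have h3 : ∀ x ∈ M, ∀ y ∈ M, x * y + y * x ∈ I := by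
      intro x hx y hy
      have e1 := h1 _ ((hM y hy).1 x).1
      rw [σmul] at e1
      have e2 := hIr (σ x) _ (h1 y hy)
      have e3 := hIl y _ (h1 x hx)
      have := I.add_mem (I.sub_mem e1 e2) e3
      convert this using 1
      noncomm_ring
    refine hIN 3 ?_
    rw [pow_succ, pow_two, Submodule.mul_le]
    intro m hm z hz
    suffices H : W * W ≤ I.comap (LinearMap.mulRight K z) from H hm
    rw [Submodule.mul_le]
    intro x hx y hy
    have hx := hWM hx
    have hy := hWM hy
    have hz := hWM hz
    have e1 := h3 x hx _ ((hM z hz).1 y).1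
    have e2 := hIr z _ (h3 x hx y hy)
    have e3 := hIl y _ (h3 x hx z hz)
    have e4 := I.sub_mem (I.add_mem e1 e2) e3
    have e5 : (2 : K) • (x * y * z) ∈ I := by
      convert e4 using 1
      rw [two_smul]
      noncomm_ring
    exact (Submodule.smul_mem_iff_of_isUnit I h2).1 e5
  obtain ⟨r, hrM, hrσ, hrI⟩ := hc
  have hσpow : ∀ k, σ (r ^ k) = r ^ k := by
    intro k
    induction k with
    | zero => simpa using σ1
    | succ k ih => rw [pow_succ, σmul, ih, hrσ, ← pow_succ, ← pow_succ']
  obtain ⟨s, hsM, hsσ, hsI, hss⟩ : ∃ s ∈ M, σ s = s ∧ s ∉ I ∧ s * s ∈ I := by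
    classical
    have hex : ∃ k, r ^ k ∈ I := ⟨d, hle (hd r hrM hrσ)⟩
    have hk := Nat.find_spec hex
    have hkm := fun m => Nat.find_min (m := m) hex
    rcases hkk : Nat.find hex with _ | _ | k
    · rw [hkk] at hk
      exact absurd (by simpa using hIl r _ hk) hrI
    · rw [hkk] at hk
      exact absurd (by simpa using hk) hrI
    · rw [hkk] at hk hkm
      refine ⟨r ^ (k + 1), ?_, hσpow _, hkm _ (by omega), ?_⟩
      · rw [pow_succ]; exact ((hM r hrM).1 _).1
      · rw [← pow_add, show k + 1 + (k + 1) = k + (k + 1 + 1) by omega, pow_add]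
        exact hIl _ _ hk
  apply hsI
  refine hlev d s fun y => ?_
  set q := s * σ y + y * s with hq
  have hqd : q ^ d ∈ I := by
    apply hle
    apply hd
    · exact M.add_mem ((hM s hsM).1 _).2 ((hM s hsM).1 _).1
    · rw [hq, map_add, σmul, σmul, σσ, hsσ, add_comm]
  have hind : ∀ k, s * q ^ k - (s * y) ^ k * s ∈ I := by
    intro k
    induction k with
    | zero => simp
    | succ k ih =>
      have e1 := hIr q _ ih
      have e2 := hIl ((s * y) ^ k) _ (hIr (σ y) _ hss)
      convert I.add_mem e1 e2 using 1
      rw [pow_succ, pow_succ]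
      generalize (s * y) ^ k = a
      generalize q ^ k = b
      rw [hq]
      noncomm_ring
  have := I.sub_mem (hIl s _ hqd) (hind d)
  simpa using this

section Rees

open SympDet Polynomial

variable {A : Type u} [CommRing A] {R : Type u} [Ring R] [Algebra A R]

/-- Evaluation at zero `A[X] → A`. -/
noncomputable def evZero (A : Type u) [CommRing A] : A[X] →ₐ[A] A := Polynomial.aeval 0

/-- Coefficient extraction `A[X] ⊗ R → R`. -/
noncomputable def tcoeff (R : Type u) [Ring R] [Algebra A R] (n : ℕ) : A[X] ⊗[A] R →ₗ[A] R :=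
  (TensorProduct.lid A R).toLinearMap ∘ₗ LinearMap.rTensor R (Polynomial.lcoeff A n)

theorem tcoeff_tmul (n : ℕ) (f : A[X]) (r : R) : tcoeff R n (f ⊗ₜ[A] r) = f.coeff n • r := by
  simp [tcoeff]

theorem tcoeff_mul (n : ℕ) (p q : A[X] ⊗[A] R) :
    tcoeff R n (p * q) = ∑ x ∈ Finset.HasAntidiagonal.antidiagonal n, tcoeff R x.1 p * tcoeff R x.2 q := by
  induction p using TensorProduct.induction_on with
  | zero => simp
  | add a b ha hb => simp only [add_mul, map_add, ha, hb, Finset.sum_add_distrib]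
  | tmul f a =>
    induction q using TensorProduct.induction_on with
    | zero => simp
    | add a b ha hb => simp only [mul_add, map_add, ha, hb, Finset.sum_add_distrib]
    | tmul g b =>
      simp only [Algebra.TensorProduct.tmul_mul_tmul, tcoeff_tmul, Polynomial.coeff_mul,
        Finset.sum_smul, smul_mul_smul_comm]

theorem tcoeff_X_smul (n : ℕ) (p : A[X] ⊗[A] R) :
    tcoeff R (n + 1) ((X : A[X]) • p) = tcoeff R n p := by
  induction p using TensorProduct.induction_on with
  | zero => simp
  | add a b ha hb => simp only [smul_add, map_add, ha, hb]
  | tmul f a => simp [TensorProduct.smul_tmul', tcoeff_tmul, Polynomial.coeff_X_mul]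

/-- The characteristic polynomial of an element vanishing at `X = 0` is `t^d` modulo `X`. -/
theorem chPoly_mod_X (s : InvAlg A R) (d : ℕ) (P : PolyLaw A ↥s.plus) (hP : P.IsHomog d)
    (h1 : P.toFun A ((1 : A) ⊗ₜ[A] s.onePlus) = 1) (x : A[X] ⊗[A] ↥s.plus)
    (hx : LinearMap.rTensor s.plus (evZero A).toLinearMap x = 0) :
    ∃ h : A[X][X], chPoly P s.onePlus A[X] x = X ^ d + C X * h := by
  have key : Polynomial.mapAlgHom (evZero A) (chPoly P s.onePlus A[X] x) = X ^ d := by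
    unfold chPoly
    rw [P.natural]
    have e1 : LinearMap.rTensor s.plus (Polynomial.mapAlgHom (evZero A)).toLinearMap
        (LinearMap.rTensor s.plus (IsScalarTower.toAlgHom A A[X] A[X][X]).toLinearMap x) =
        LinearMap.rTensor s.plus (IsScalarTower.toAlgHom A A A[X]).toLinearMap
        (LinearMap.rTensor s.plus (evZero A).toLinearMap x) := by
      rw [← LinearMap.rTensor_comp_apply, ← LinearMap.rTensor_comp_apply]
      congr 2
      ext
      simp [evZero]
    rw [map_sub, e1, hx, map_zero, sub_zero, LinearMap.rTensor_tmul]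
    have e2 : (Polynomial.mapAlgHom (evZero A)).toLinearMap (X : A[X][X]) ⊗ₜ[A] s.onePlus
        = (X : A[X]) • ((1 : A[X]) ⊗ₜ[A] s.onePlus) := by
      simp [TensorProduct.smul_tmul']
    rw [e2, hP]
    have e3 := P.natural A A[X] (Algebra.ofId A A[X]) ((1 : A) ⊗ₜ[A] s.onePlus)
    rw [h1, map_one, LinearMap.rTensor_tmul] at e3
    simp only [AlgHom.toLinearMap_apply, map_one] at e3
    rw [← e3, mul_one]
  have hdvd : C (X : A[X]) ∣ chPoly P s.onePlus A[X] x - X ^ d := by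
    rw [Polynomial.C_dvd_iff_dvd_coeff]
    intro i
    rw [Polynomial.X_dvd_iff, Polynomial.coeff_zero_eq_aeval_zero]
    have := congrArg (fun q => Polynomial.coeff q i) key
    simp only [Polynomial.coe_mapAlgHom, Polynomial.coeff_map] at this
    rw [Polynomial.coeff_sub, map_sub]
    have h3 : Polynomial.aeval (0 : A) ((X ^ d : A[X][X]).coeff i) = (X ^ d : A[X]).coeff i := by
      rw [Polynomial.coeff_X_pow, Polynomial.coeff_X_pow]
      split_ifs <;> simp
    rw [h3, ← this]
    exact sub_self _
  obtain ⟨h, hh⟩ := hdvd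
  exact ⟨h, by rw [← hh]; ring⟩


/-- The Rees algebra: the `A[X]`-subalgebra generated by the `X ⊗ v`, `v ∈ S`. -/
noncomputable def rees (S : Set R) : Subalgebra A[X] (A[X] ⊗[A] R) :=
  Algebra.adjoin A[X] ((fun v : R => (X : A[X]) ⊗ₜ[A] v) '' S)

theorem tcoeff_rees (S : Set R) (hS : (1 : R) ∈ S) (p : A[X] ⊗[A] R) (hp : p ∈ rees (A := A) S) :
    ∀ n, tcoeff R n p ∈ (Submodule.span A S) ^ n := by
  have h1V : (1 : R) ∈ Submodule.span A S := Submodule.subset_span hS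
  have h1 : ∀ n, (1 : R) ∈ (Submodule.span A S) ^ n := by
    intro n
    simpa using Submodule.pow_mem_pow (Submodule.span A S) h1V n
  induction hp using Algebra.adjoin_induction with
  | mem x hx =>
    obtain ⟨v, hv, rfl⟩ := hx
    intro n
    simp only [tcoeff_tmul, Polynomial.coeff_X]
    split_ifs with h
    · subst h
      simpa using Submodule.subset_span hv
    · simp
  | algebraMap r =>
    intro n
    rw [Algebra.TensorProduct.algebraMap_apply, tcoeff_tmul]
    exact Submodule.smul_mem _ _ (h1 n)
  | add x y _ _ hx hy =>
    intro n
    rw [map_add]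
    exact Submodule.add_mem _ (hx n) (hy n)
  | mul x y _ _ hx hy =>
    intro n
    rw [tcoeff_mul]
    refine Submodule.sum_mem _ fun i hi => ?_
    rw [← Finset.HasAntidiagonal.mem_antidiagonal.1 hi, pow_add]
    exact Submodule.mul_mem_mul (hx _) (hy _)

/-- The involution on `A[X] ⊗ R`. -/
noncomputable def starX (s : InvAlg A R) : A[X] ⊗[A] R →ₗ[A[X]] A[X] ⊗[A] R :=
  s.star.baseChange A[X]

theorem starX_tmul (s : InvAlg A R) (f : A[X]) (r : R) :
    starX s (f ⊗ₜ[A] r) = f ⊗ₜ[A] s.star r := rfl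

theorem starX_one (s : InvAlg A R) : starX s 1 = 1 := by
  rw [Algebra.TensorProduct.one_def, starX_tmul, s.star_one]

theorem starX_starX (s : InvAlg A R) (x : A[X] ⊗[A] R) : starX s (starX s x) = x := by
  induction x using TensorProduct.induction_on with
  | zero => simp
  | add a b ha hb => simp only [map_add, ha, hb]
  | tmul f a => simp [starX_tmul, s.star_star]

theorem starX_mul (s : InvAlg A R) (x y : A[X] ⊗[A] R) :
    starX s (x * y) = starX s y * starX s x := by
  induction x using TensorProduct.induction_on with
  | zero => simp
  | add a b ha hb => simp only [map_add, add_mul, mul_add, ha, hb]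
  | tmul f a =>
    induction y using TensorProduct.induction_on with
    | zero => simp
    | add a b ha hb => simp only [map_add, add_mul, mul_add, ha, hb]
    | tmul g b =>
      simp [starX_tmul, s.star_mul, mul_comm f g]

theorem starX_rees (s : InvAlg A R) (S : Set R) (hS : ∀ v ∈ S, s.star v ∈ S) (p : A[X] ⊗[A] R)
    (hp : p ∈ rees (A := A) S) : starX s p ∈ rees (A := A) S := by
  induction hp using Algebra.adjoin_induction with
  | mem x hx =>
    obtain ⟨v, hv, rfl⟩ := hx
    exact Algebra.subset_adjoin ⟨_, hS v hv, rfl⟩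
  | algebraMap r =>
    rw [Algebra.algebraMap_eq_smul_one, map_smul, starX_one]
    exact Subalgebra.smul_mem _ (Subalgebra.one_mem _) _
  | add x y _ _ hx hy =>
    rw [map_add]
    exact Subalgebra.add_mem _ hx hy
  | mul x y _ _ hx hy =>
    rw [starX_mul]
    exact Subalgebra.mul_mem _ hy hx

theorem add_starX_mem_range (s : InvAlg A R) (x : A[X] ⊗[A] R) :
    ∃ y, s.incl A[X] y = x + starX s x := by
  induction x using TensorProduct.induction_on with
  | zero => exact ⟨0, by simp⟩
  | add a b ha hb =>
    obtain ⟨y, hy⟩ := ha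
    obtain ⟨z, hz⟩ := hb
    exact ⟨y + z, by rw [map_add, hy, hz, map_add]; abel⟩
  | tmul f a =>
    refine ⟨f ⊗ₜ[A] ⟨a + s.star a, ?_⟩, ?_⟩
    · simp [InvAlg.plus, s.star_star, add_comm]
    · rw [starX_tmul, ← TensorProduct.tmul_add]
      rfl

theorem exists_incl (h2 : IsUnit (2 : A)) (s : InvAlg A R) (x : A[X] ⊗[A] R)
    (hx : starX s x = x) : ∃ y, s.incl A[X] y = x := by
  obtain ⟨y, hy⟩ := add_starX_mem_range s x
  obtain ⟨c, hc⟩ := h2.exists_left_inv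
  refine ⟨c • y, ?_⟩
  rw [map_smul, hy, hx, ← two_smul A x, smul_smul, hc, one_smul]

/-- Key fact: symmetric elements vanishing at `X = 0` have `d`-th power divisible by `X`. -/
theorem pow_mem_X (h2 : IsUnit (2 : A)) (s : InvAlg A R) (d : ℕ) (D : PolyLaw A R)
    (P : PolyLaw A ↥s.plus) (hCH : IsSympCH s d D P) (T : Subalgebra A[X] (A[X] ⊗[A] R))
    (x : A[X] ⊗[A] R) (hxT : x ∈ T) (hx : starX s x = x) (hx0 : tcoeff R 0 x = 0) :
    ∃ y ∈ T, x ^ d = (X : A[X]) • y := by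
  obtain ⟨z, rfl⟩ := exists_incl h2 s x hx
  have hz : LinearMap.rTensor s.plus (evZero A).toLinearMap z = 0 := by
    apply (TensorProduct.lid A s.plus).injective
    apply Subtype.val_injective
    rw [map_zero]
    have : ∀ z : A[X] ⊗[A] ↥s.plus, ((TensorProduct.lid A s.plus)
        (LinearMap.rTensor s.plus (evZero A).toLinearMap z) : R) =
        tcoeff R 0 (s.incl A[X] z) := by
      intro z
      induction z using TensorProduct.induction_on with
      | zero => simp
      | add a b ha hb => simp only [map_add, Submodule.coe_add, ha, hb]
      | tmul f a =>
        simp [InvAlg.incl, tcoeff_tmul, evZero, Polynomial.coeff_zero_eq_aeval_zero]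
    rw [this, hx0]
    rfl
  obtain ⟨h, hh⟩ := chPoly_mod_X s d P hCH.1.1.homogP hCH.1.1.one z hz
  have h0 := hCH.2 A[X] z
  unfold chEval at h0
  rw [hh, map_add, map_pow, map_mul, Polynomial.aeval_X, Polynomial.aeval_C] at h0
  refine ⟨-Polynomial.aeval (s.incl A[X] z) h, ?_, ?_⟩
  · refine Subalgebra.neg_mem _ ?_
    exact Polynomial.aeval_mem_adjoin_singleton A[X] (s.incl A[X] z) |> fun hm =>
      (Algebra.adjoin_le (by simpa using hxT) : Algebra.adjoin A[X] {s.incl A[X] z} ≤ T) hm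
  · have e : (X : A[X]) • Polynomial.aeval (s.incl A[X] z) h =
        algebraMap A[X] (A[X] ⊗[A] R) X * Polynomial.aeval (s.incl A[X] z) h :=
      Algebra.smul_def (A := A[X] ⊗[A] R) _ _
    rw [smul_neg, e]
    exact eq_neg_of_add_eq_zero_left h0

theorem main_finite (h2 : IsUnit (2 : A)) (s : InvAlg A R) (d : ℕ) (D : PolyLaw A R)
    (P : PolyLaw A ↥s.plus) (hCH : IsSympCH s d D P)
    (S : Set R) (hfin : S.Finite) (h1 : (1 : R) ∈ S) (hstar : ∀ v ∈ S, s.star v ∈ S)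
    (hgen : Algebra.adjoin A S = ⊤) : Module.Finite A R := by
  set T := rees (A := A) S with hT
  let σ : T →ₗ[A[X]] T := (starX s).restrict (p := Subalgebra.toSubmodule T)
    (q := Subalgebra.toSubmodule T) (starX_rees s S hstar)
  have hσ : ∀ x : T, (σ x : A[X] ⊗[A] R) = starX s x := fun x => rfl
  let M : Submodule A[X] T :=
    { carrier := {x | tcoeff R 0 (x : A[X] ⊗[A] R) = 0}
      add_mem' := by
        intro a b ha hb
        simp only [Set.mem_ofPred_eq] at ha hb ⊢
        simp [ha, hb]
      zero_mem' := by simp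
      smul_mem' := by
        intro c x hx
        simp only [Set.mem_ofPred_eq] at hx ⊢
        rw [Subalgebra.coe_smul, Algebra.smul_def, tcoeff_mul]
        simp [hx] }
  have hMmem : ∀ x : T, x ∈ M ↔ tcoeff R 0 (x : A[X] ⊗[A] R) = 0 := fun x => Iff.rfl
  let I0 : Submodule A[X] T := LinearMap.range (LinearMap.lsmul A[X] T X)
  have hI0mem : ∀ x : T, x ∈ I0 ↔ ∃ y : T, (X : A[X]) • y = x := fun x => Iff.rfl
  have hgenT : ∀ v ∈ S, (X : A[X]) ⊗ₜ[A] v ∈ T := fun v hv =>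
    Algebra.subset_adjoin ⟨v, hv, rfl⟩
  let g : S → T := fun v => ⟨(X : A[X]) ⊗ₜ[A] (v : R), hgenT v v.2⟩
  let W : Submodule A[X] T := Submodule.span A[X] (Set.range g)
  have : Finite S := hfin
  obtain ⟨N, hN⟩ := aux_nilpotent (K := A[X]) (T := T)
    (by have h3 := h2.map (algebraMap A A[X]); rwa [map_ofNat] at h3) σ
    (Subtype.ext (by rw [hσ]; exact starX_one s))
    (fun x y => Subtype.ext (by rw [hσ]; exact starX_mul s x y))
    (fun x => Subtype.ext (by rw [hσ, hσ]; exact starX_starX s x))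
    I0 M W
    (by
      intro x hx
      rw [hMmem] at hx
      refine ⟨fun t => ⟨?_, ?_⟩, ?_⟩
      · rw [hMmem, Subalgebra.coe_mul, tcoeff_mul]; simp [hx]
      · rw [hMmem, Subalgebra.coe_mul, tcoeff_mul]; simp [hx]
      · rw [hMmem, hσ]
        have : ∀ z : A[X] ⊗[A] R, tcoeff R 0 (starX s z) = s.star (tcoeff R 0 z) := by
          intro z
          induction z using TensorProduct.induction_on with
          | zero => simp
          | add a b ha hb => simp only [map_add, ha, hb]
          | tmul f a => simp [starX_tmul, tcoeff_tmul]
        rw [this, hx, map_zero])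
    (by
      intro x hx
      obtain ⟨y, rfl⟩ := (hI0mem x).1 hx
      refine ⟨fun t => ⟨(hI0mem _).2 ⟨t * y, ?_⟩, (hI0mem _).2 ⟨y * t, ?_⟩⟩,
        (hI0mem _).2 ⟨σ y, ?_⟩⟩
      · rw [mul_smul_comm]
      · rw [smul_mul_assoc]
      · rw [map_smul])
    (Submodule.fg_span (Set.finite_range g))
    (by
      rw [Submodule.span_le]
      rintro _ ⟨v, rfl⟩
      change tcoeff R 0 ((X : A[X]) ⊗ₜ[A] (v : R)) = 0
      simp [tcoeff_tmul])
    d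
    (by
      intro r hr hrσ
      obtain ⟨y, hy, hyd⟩ := pow_mem_X h2 s d D P hCH T r r.2
        (by rw [← hσ, hrσ]) ((hMmem r).1 hr)
      refine (hI0mem _).2 ⟨⟨y, hy⟩, Subtype.ext ?_⟩
      rw [Subalgebra.coe_pow, hyd]
      rfl)
  set V := Submodule.span A S with hV
  have h1V : (1 : R) ∈ V := Submodule.subset_span h1
  -- elements of `V^n` in degree `n`
  have hVW : ∀ n, ∀ w ∈ V ^ n, ∃ t ∈ W ^ n, (t : A[X] ⊗[A] R) = (X ^ n : A[X]) ⊗ₜ[A] w := by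
    intro n
    induction n with
    | zero =>
      intro w hw
      rw [pow_zero, Submodule.mem_one] at hw
      obtain ⟨a, rfl⟩ := hw
      refine ⟨algebraMap A[X] T (C a), ?_, ?_⟩
      · rw [pow_zero]; exact Submodule.algebraMap_mem _
      · rw [Subalgebra.coe_algebraMap, Algebra.TensorProduct.algebraMap_apply, pow_zero,
          Algebra.algebraMap_eq_smul_one (A := R), TensorProduct.tmul_smul,
          TensorProduct.smul_tmul']
        congr 1
        simp [Polynomial.smul_eq_C_mul]
    | succ n ih =>
      intro w hw
      rw [pow_succ] at hw
      induction hw using Submodule.mul_induction_on' with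
      | mem_mul_mem m hm v hv =>
        obtain ⟨t, ht, hte⟩ := ih m hm
        induction hv using Submodule.span_induction with
        | mem v hv =>
          refine ⟨t * g ⟨v, hv⟩, ?_, ?_⟩
          · rw [pow_succ]
            exact Submodule.mul_mem_mul ht (Submodule.subset_span ⟨_, rfl⟩)
          · rw [Subalgebra.coe_mul, hte, pow_succ]
            simp [g]
        | zero => exact ⟨0, Submodule.zero_mem _, by simp⟩
        | add x y _ _ hx hy =>
          obtain ⟨a, ha, hae⟩ := hx
          obtain ⟨b, hb, hbe⟩ := hy
          exact ⟨a + b, Submodule.add_mem _ ha hb, by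
            rw [Subalgebra.coe_add, hae, hbe, mul_add, TensorProduct.tmul_add]⟩
        | smul c x _ hx =>
          obtain ⟨a, ha, hae⟩ := hx
          refine ⟨(C c : A[X]) • a, Submodule.smul_mem _ _ ha, ?_⟩
          rw [Subalgebra.coe_smul, hae, mul_smul_comm, TensorProduct.tmul_smul,
            TensorProduct.smul_tmul', TensorProduct.smul_tmul', smul_eq_mul,
            Polynomial.smul_eq_C_mul]
      | add x _ y _ hx hy =>
        obtain ⟨a, ha, hae⟩ := hx
        obtain ⟨b, hb, hbe⟩ := hy
        exact ⟨a + b, Submodule.add_mem _ ha hb, by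
          rw [Subalgebra.coe_add, hae, hbe, TensorProduct.tmul_add]⟩
  have hN1 : W ^ (N + 1) ≤ I0 := by
    rw [pow_succ, Submodule.mul_le]
    intro m hm n _
    obtain ⟨y, rfl⟩ := (hI0mem m).1 (hN hm)
    exact (hI0mem _).2 ⟨y * n, by rw [smul_mul_assoc]⟩
  have hstep : V ^ (N + 1) ≤ V ^ N := by
    intro w hw
    obtain ⟨t, ht, hte⟩ := hVW _ w hw
    obtain ⟨y, hy⟩ := (hI0mem t).1 (hN1 ht)
    have h3 := tcoeff_rees (A := A) S h1 (y : A[X] ⊗[A] R) y.2 N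
    rw [← tcoeff_X_smul, ← Subalgebra.coe_smul, hy, hte, tcoeff_tmul] at h3
    simpa using h3
  have hall : ∀ k, V ^ (N + k) ≤ V ^ N := by
    intro k
    induction k with
    | zero => exact le_rfl
    | succ k ih =>
      rw [← add_assoc, pow_succ]
      refine (mul_le_mul' ih le_rfl).trans ?_
      rw [← pow_succ]
      exact hstep
  have h1N : ∀ n, (1 : R) ∈ V ^ n := by
    intro n
    simpa using Submodule.pow_mem_pow V h1V n
  have hVN : V ≤ V ^ N := by
    refine le_trans ?_ (hall 1)
    intro v hv
    rw [pow_succ]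
    simpa using Submodule.mul_mem_mul (h1N N) hv
  have htop : V ^ N = ⊤ := by
    let B : Subalgebra A R := (V ^ N).toSubalgebra (h1N N) (by
      intro x y hx hy
      apply hall N
      rw [pow_add]
      exact Submodule.mul_mem_mul hx hy)
    have hB : B = ⊤ := by
      rw [eq_top_iff, ← hgen]
      refine Algebra.adjoin_le fun v hv => ?_
      exact hVN (Submodule.subset_span hv)
    rw [eq_top_iff]
    intro x _
    have : x ∈ B := by rw [hB]; trivial
    exact this
  refine ⟨?_⟩
  rw [← htop]
  exact (Submodule.fg_span hfin).pow N

end Rees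

open SympDet in
theorem stmt_8 {A : Type u} [CommRing A] {R : Type u} [Ring R] [Algebra A R]
    (h2 : IsUnit (2 : A)) (s : InvAlg A R) (d : ℕ) (D : PolyLaw A R) (P : PolyLaw A ↥s.plus)
    (hCH : IsSympCH s d D P)
    (hfg : ∃ S : Finset R, Algebra.adjoin A (S : Set R) = ⊤) :
    Module.Finite A R := by
  obtain ⟨S, hS⟩ := hfg
  refine main_finite h2 s d D P hCH (insert 1 ((S : Set R) ∪ s.star '' (S : Set R))) ?_ ?_ ?_ ?_
  · exact (S.finite_toSet.union (S.finite_toSet.image _)).insert _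
  · exact Set.mem_insert _ _
  · rintro v (rfl | hv | ⟨w, hw, rfl⟩)
    · left; exact s.star_one
    · right; right; exact ⟨v, hv, rfl⟩
    · right; left; rw [s.star_star]; exact hw
  · rw [eq_top_iff, ← hS]
    exact Algebra.adjoin_mono (fun v hv => Or.inr (Or.inl hv))
end

section
/- Let A be a local commutative ring with maximal ideal m_A, residue field k = A/m_A, and 2 ∈ A^×. Let (R,*,D,P) be a symplectic Cayley–Hamilton A-algebra of degree 2d; write R̄ = R/m_A·R and let D̄ : R̄ → k be the reduction of D modulo m_A. Then the kernel of the composite map R → R̄ → R̄/ker(D̄) equals the Jacobson radical Rad(R) of R. In particular, if A = k is a field, then ker(D) = Rad(R). -/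
/-!
STATEMENT 9: for a symplectic Cayley–Hamilton algebra over a local ring `A` (with
`2 ∈ A^×`), the kernel of `R → R̄/ker(D̄)` equals the Jacobson radical of `R`. An element
`x ∈ R` maps into `ker(D̄)` iff for every `A`-algebra `B` killing the maximal ideal (i.e.
every `k`-algebra), `x` lies in the kernel of `D` base-changed to `B`.
-/

open scoped TensorProduct

universe u

namespace SympDetAux

open SympDet Polynomial

variable {A : Type u} [CommRing A] {R : Type u} [Ring R] [Algebra A R]

/-- Base change along an `A`-algebra map. -/
noncomputable def bc (R : Type u) [Ring R] [Algebra A R] {B B' : Type u} [CommRing B] [Algebra A B]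
    [CommRing B'] [Algebra A B'] (f : B →ₐ[A] B') : B ⊗[A] R →ₐ[A] B' ⊗[A] R :=
  Algebra.TensorProduct.map f (AlgHom.id A R)

theorem bc_tmul {B B' : Type u} [CommRing B] [Algebra A B]
    [CommRing B'] [Algebra A B'] (f : B →ₐ[A] B') (b : B) (r : R) :
    bc R f (b ⊗ₜ[A] r) = f b ⊗ₜ[A] r := by
  simp [bc]

theorem bc_smul {B B' : Type u} [CommRing B] [Algebra A B]
    [CommRing B'] [Algebra A B'] (f : B →ₐ[A] B') (b : B) (x : B ⊗[A] R) :
    bc R f (b • x) = f b • bc R f x := by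
  induction x with
  | zero => simp
  | tmul c r => simp [bc_tmul, TensorProduct.smul_tmul']
  | add x y hx hy => simp [hx, hy]

theorem bc_bc {B B' B'' : Type u} [CommRing B] [Algebra A B]
    [CommRing B'] [Algebra A B'] [CommRing B''] [Algebra A B'']
    (f : B →ₐ[A] B') (g : B' →ₐ[A] B'') (x : B ⊗[A] R) :
    bc R g (bc R f x) = bc R (g.comp f) x := by
  induction x with
  | zero => simp
  | tmul c r => simp [bc_tmul]
  | add x y hx hy => simp [hx, hy]

theorem bc_id {B : Type u} [CommRing B] [Algebra A B] (x : B ⊗[A] R) :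
    bc R (AlgHom.id A B) x = x := by
  simp [bc]

theorem nat_bc (D : PolyLaw A R) {B B' : Type u} [CommRing B] [Algebra A B]
    [CommRing B'] [Algebra A B'] (f : B →ₐ[A] B') (x : B ⊗[A] R) :
    f (D.toFun B x) = D.toFun B' (bc R f x) :=
  D.natural B B' f x

/-- The quotient map `B[X] → B[X]/(X^N)`. -/
noncomputable def qm (A : Type u) [CommRing A] (B : Type u) [CommRing B] [Algebra A B] (N : ℕ) :
    B[X] →ₐ[A] (B[X] ⧸ Ideal.span {(X : B[X]) ^ N}) :=
  Ideal.Quotient.mkₐ A _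

/-- The constants map. -/
noncomputable def cm (A : Type u) [CommRing A] (B : Type u) [CommRing B] [Algebra A B] :
    B →ₐ[A] B[X] := IsScalarTower.toAlgHom A B B[X]

/-- Evaluation. -/
noncomputable def ev (A : Type u) [CommRing A] {B : Type u} [CommRing B] [Algebra A B] (b : B) :
    B[X] →ₐ[A] B := (Polynomial.aeval b).restrictScalars A

theorem ev_X {B : Type u} [CommRing B] [Algebra A B] (b : B) : ev A b X = b := by
  simp [ev]

theorem ev_apply {B : Type u} [CommRing B] [Algebra A B] (b : B) (p : B[X]) :
    ev A b p = p.eval b := by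
  simp [ev, Polynomial.aeval_def, Polynomial.eval₂_eq_eval_map]

theorem ev_comp_cm {B : Type u} [CommRing B] [Algebra A B] (b : B) :
    (ev A b).comp (cm A B) = AlgHom.id A B := by
  ext c
  simp [ev, cm]

theorem bc_ev_cm {B : Type u} [CommRing B] [Algebra A B] (b : B) (x : B ⊗[A] R) :
    bc R (ev A b) (bc R (cm A B) x) = x := by
  rw [bc_bc, ev_comp_cm, bc_id]

theorem poly_eq {B : Type u} [CommRing B] [Algebra A B] (f g : B[X])
    (h : ∀ N, qm A B N f = qm A B N g) : f = g := by
  ext i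
  have h1 := h (i + 1)
  have h2 : f - g ∈ Ideal.span {(X : B[X]) ^ (i + 1)} := Ideal.Quotient.eq.1 h1
  rw [Ideal.mem_span_singleton, Polynomial.X_pow_dvd_iff] at h2
  have := h2 i (Nat.lt_succ_self i)
  rwa [coeff_sub, sub_eq_zero] at this

theorem smul_pow_aux {Q : Type u} [CommRing Q] [Algebra A Q] (c : Q) (r : Q ⊗[A] R) (N : ℕ) :
    (c • r) ^ N = c ^ N • r ^ N := by
  have : c • r = (c ⊗ₜ[A] (1 : R)) * r := by
    induction r with
    | zero => simp
    | tmul a b => simp [TensorProduct.smul_tmul']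
    | add x y hx hy => rw [smul_add, hx, hy, mul_add]
  have h2 : c ^ N • r ^ N = ((c ^ N) ⊗ₜ[A] (1 : R)) * r ^ N := by
    induction r ^ N with
    | zero => simp
    | tmul a b => simp [TensorProduct.smul_tmul']
    | add x y hx hy => rw [smul_add, hx, hy, mul_add]
  have hc : Commute (c ⊗ₜ[A] (1 : R)) r := by
    induction r with
    | zero => exact Commute.zero_right _
    | tmul a b => simp [Commute, SemiconjBy, mul_comm]
    | add x y hx hy =>
      have e : ∀ w : Q ⊗[A] R, c ⊗ₜ[A] (1 : R) * w = w * c ⊗ₜ[A] (1 : R) := by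
        intro w
        induction w with
        | zero => simp
        | tmul a b => simp [mul_comm]
        | add x y hx hy => rw [mul_add, add_mul, hx, hy]
      exact e _
  rw [this, h2, hc.mul_pow, Algebra.TensorProduct.tmul_pow, one_pow]

theorem smul_pow_zero {Q : Type u} [CommRing Q] [Algebra A Q] (c : Q) (r : Q ⊗[A] R) (N : ℕ)
    (h : c ^ N = 0) : (c • r) ^ N = 0 := by
  rw [smul_pow_aux, h, zero_smul]

/-- Elements congruent to `1` modulo `X` are units modulo `X ^ N`. -/
theorem isUnit_qm {B : Type u} [CommRing B] [Algebra A B] (N : ℕ) (r : B[X] ⊗[A] R) :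
    IsUnit (bc R (qm A B N) (1 + (X : B[X]) • r)) := by
  rw [map_add, map_one, bc_smul]
  apply IsNilpotent.isUnit_one_add
  refine ⟨N, ?_⟩
  have : qm A B N (X ^ N) = 0 :=
    Ideal.Quotient.eq_zero_iff_mem.2 (Ideal.mem_span_singleton_self _)
  rw [map_pow] at this
  exact smul_pow_zero _ _ N this

theorem law_eq (D : PolyLaw A R) {B : Type u} [CommRing B] [Algebra A B] (u v : B[X] ⊗[A] R)
    (h : ∀ N, D.toFun _ (bc R (qm A B N) u) = D.toFun _ (bc R (qm A B N) v)) (b : B) :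
    D.toFun B (bc R (ev A b) u) = D.toFun B (bc R (ev A b) v) := by
  rw [← nat_bc, ← nat_bc]
  congr 1
  apply poly_eq (A := A)
  intro N
  rw [nat_bc, nat_bc, h]

theorem law_ne_zero {D : PolyLaw A R} (hD : D.IsMult) {B : Type u} [CommRing B] [Algebra A B]
    [Nontrivial B] (u v : B ⊗[A] R) (h : u * v = 1) : D.toFun B v ≠ 0 := by
  intro h0
  have := (hD B).2 u v
  rw [h, (hD B).1, h0, mul_zero] at this
  exact one_ne_zero this

/-- Cancelling a unit on the left. -/
theorem law_unit {D : PolyLaw A R} (hD : D.IsMult) {B : Type u} [CommRing B] [Algebra A B]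
    (U : B ⊗[A] R) (hU : IsUnit U) (z y : B ⊗[A] R)
    (h : ∀ y', D.toFun B (z + y') = D.toFun B y') : D.toFun B (U * z + y) = D.toFun B y := by
  obtain ⟨U, rfl⟩ := hU
  have h1 : (U : B ⊗[A] R) * z + y = U * (z + (U⁻¹ : (B ⊗[A] R)ˣ) * y) := by
    rw [mul_add, Units.mul_inv_cancel_left]
  rw [h1, (hD B).2, h, ← (hD B).2, Units.mul_inv_cancel_left]

section dir1

/-- If `x` is in the kernel of `D` over `B`-algebras then `D (1 + y x) = 1`. -/
theorem one_add_mul {D : PolyLaw A R} (hD : D.IsMult) {B : Type u} [CommRing B] [Algebra A B]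
    (x y : R)
    (h : ∀ (B' : Type u) [CommRing B'] [Algebra A B'] (_ : B →ₐ[A] B') (z : B' ⊗[A] R),
      D.toFun B' (1 ⊗ₜ[A] x + z) = D.toFun B' z) :
    D.toFun B (1 ⊗ₜ[A] (1 + y * x)) = 1 := by
  have key := law_eq D (B := B) (1 + (X : B[X]) ⊗ₜ[A] (y * x)) 1 (fun N => by
    have hU := isUnit_qm (A := A) (R := R) (B := B) N (1 ⊗ₜ[A] y)
    have f : B →ₐ[A] (B[X] ⧸ Ideal.span {(X : B[X]) ^ N}) := (qm A B N).comp (cm A B)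
    have h1 := law_unit hD _ hU (1 ⊗ₜ[A] x) (1 - 1 ⊗ₜ[A] x) (fun y' => h _ f y')
    have h2 := h _ f (1 - 1 ⊗ₜ[A] x)
    rw [← h2] at h1
    convert h1 using 2
    · rw [map_add, map_one, bc_tmul, map_add, map_one, bc_smul, bc_tmul, map_one, add_mul,
        one_mul, smul_mul_assoc, Algebra.TensorProduct.tmul_mul_tmul, mul_one,
        TensorProduct.smul_tmul', smul_eq_mul, mul_one]
      abel
    · simp) 1
  rw [map_add, map_one, bc_tmul, ev_X, (hD B).1] at key
  rwa [TensorProduct.tmul_add]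

end dir1

section dir2

theorem left_inv_finite {K : Type u} [CommRing K] [Algebra A K] [Module.Finite A K]
    {ι : Type u} [Fintype ι] (c : ι → K) (z : ι → R) (hz : ∀ i, z i ∈ Ring.jacobson R) :
    ∃ v : R ⊗[A] K, v * (1 + ∑ i, z i ⊗ₜ[A] c i) = 1 := by
  let φ : R ⊗[A] K →ₗ[R] R ⊗[A] K :=
    { toFun := fun m => m * (1 + ∑ i, z i ⊗ₜ[A] c i)
      map_add' := fun x y => add_mul _ _ _
      map_smul' := fun r x => smul_mul_assoc _ _ _ }
  have hmem : ∀ m : R ⊗[A] K, m * ∑ i, z i ⊗ₜ[A] c i ∈ Module.jacobson R (R ⊗[A] K) := by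
    intro m
    induction m with
    | zero => simp
    | add x y hx hy => rw [add_mul]; exact add_mem hx hy
    | tmul r k =>
      rw [Finset.mul_sum]
      refine sum_mem fun i _ => ?_
      apply Ring.jacobson_smul_top_le
      have : r ⊗ₜ[A] k * z i ⊗ₜ[A] c i = (r * z i) • ((1 : R) ⊗ₜ[A] (k * c i)) := by
        simp [TensorProduct.smul_tmul']
      rw [this]
      exact Submodule.smul_mem_smul (Ideal.mul_mem_left _ _ (hz i)) trivial
  have htop : LinearMap.range φ = ⊤ := by
    rcases eq_top_or_exists_le_coatom (LinearMap.range φ) with h | ⟨N, hN, hle⟩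
    · exact h
    · exfalso
      apply hN.1
      rw [eq_top_iff]
      intro m _
      have h1 : φ m ∈ N := hle ⟨m, rfl⟩
      have h2 : m * ∑ i, z i ⊗ₜ[A] c i ∈ N := (sInf_le hN : Module.jacobson R _ ≤ N) (hmem m)
      have h3 : m = φ m - m * ∑ i, z i ⊗ₜ[A] c i := by
        change m = m * (1 + _) - _
        rw [mul_add, mul_one, add_sub_cancel_right]
      rw [h3]
      exact sub_mem h1 h2
  have : (1 : R ⊗[A] K) ∈ LinearMap.range φ := htop ▸ trivial
  exact this

theorem left_inv_integral {L : Type u} [CommRing L] [Algebra A L] [Algebra.IsIntegral A L]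
    {ι : Type u} [Fintype ι] (c : ι → L) (z : ι → R) (hz : ∀ i, z i ∈ Ring.jacobson R) :
    ∃ v : L ⊗[A] R, v * (1 + ∑ i, c i ⊗ₜ[A] z i) = 1 := by
  let K := Algebra.adjoin A (Set.range c)
  have : Module.Finite A K :=
    Module.Finite.of_fg (fg_adjoin_of_finite (Set.finite_range c)
      (fun x _ => Algebra.IsIntegral.isIntegral x))
  obtain ⟨v, hv⟩ := left_inv_finite (A := A) (K := K) (R := R)
    (fun i => ⟨c i, Algebra.subset_adjoin ⟨i, rfl⟩⟩) z hz
  let g : R ⊗[A] K →ₐ[A] L ⊗[A] R :=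
    (bc R K.val).comp (Algebra.TensorProduct.comm A R K).toAlgHom
  refine ⟨g v, ?_⟩
  have := congrArg g hv
  simpa [g, bc_tmul] using this

theorem law_closed {D : PolyLaw A R} (hD : D.IsMult)
    {L : Type u} [Field L] [IsAlgClosed L] [Algebra A L] [Algebra.IsIntegral A L]
    {ι : Type u} [Fintype ι] (c : ι → L) (z : ι → R) (hz : ∀ i, z i ∈ Ring.jacobson R) :
    D.toFun L (1 + ∑ i, c i ⊗ₜ[A] z i) = 1 := by
  let u : L[X] ⊗[A] R := 1 + ∑ i, (X * C (c i)) ⊗ₜ[A] z i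
  have hu : ∀ a : L, (D.toFun L[X] u).eval a = D.toFun L (1 + ∑ i, (a * c i) ⊗ₜ[A] z i) := by
    intro a
    rw [← ev_apply (A := A), nat_bc]
    congr 1
    simp [u, bc_tmul, ev_apply, mul_comm _ a]
  have hroot : (D.toFun L[X] u).degree = 0 := by
    by_contra h
    obtain ⟨a, ha⟩ := IsAlgClosed.exists_root _ h
    rw [Polynomial.IsRoot, hu] at ha
    obtain ⟨v, hv⟩ := left_inv_integral (A := A) (fun i => a * c i) z hz
    exact law_ne_zero hD _ _ hv ha
  have hC := Polynomial.eq_C_of_degree_eq_zero hroot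
  have h0 := hu 0
  have h1 := hu 1
  rw [hC, eval_C] at h0 h1
  simp only [one_mul] at h1
  rw [← h1, h0]
  simp [(hD L).1]

theorem law_generic [IsLocalRing A] {D : PolyLaw A R} (hD : D.IsMult)
    {ι : Type u} [Fintype ι] (z : ι → R) (hz : ∀ i, z i ∈ Ring.jacobson R) :
    D.toFun (MvPolynomial ι (IsLocalRing.ResidueField A))
      (1 + ∑ i, (MvPolynomial.X i) ⊗ₜ[A] z i) = 1 := by
  let k := IsLocalRing.ResidueField A
  let L := AlgebraicClosure k
  have : Algebra.IsIntegral A k :=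
    ⟨fun x => by
      obtain ⟨a, rfl⟩ := IsLocalRing.residue_surjective x
      exact isIntegral_algebraMap⟩
  have : Algebra.IsIntegral A L := Algebra.IsIntegral.trans k
  apply MvPolynomial.map_injective (algebraMap k L) (algebraMap k L).injective
  apply MvPolynomial.funext
  intro c
  have h := nat_bc D ((MvPolynomial.aeval (R := k) c).restrictScalars A)
    (1 + ∑ i, (MvPolynomial.X i) ⊗ₜ[A] z i : MvPolynomial ι k ⊗[A] R)
  rw [map_one, map_one, MvPolynomial.eval_map]
  refine h.trans ?_
  rw [← law_closed hD c z hz]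
  congr 1
  simp [bc_tmul]

theorem law_special [IsLocalRing A] {D : PolyLaw A R} (hD : D.IsMult)
    {ι : Type u} [Fintype ι] (z : ι → R) (hz : ∀ i, z i ∈ Ring.jacobson R)
    {B : Type u} [CommRing B] [Algebra A B]
    (hB : ∀ a ∈ IsLocalRing.maximalIdeal A, algebraMap A B a = 0) (b : ι → B) :
    D.toFun B (1 + ∑ i, b i ⊗ₜ[A] z i) = 1 := by
  let _ : Algebra (IsLocalRing.ResidueField A) B :=
    (Ideal.Quotient.lift (IsLocalRing.maximalIdeal A) (algebraMap A B) hB).toAlgebra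
  have : IsScalarTower A (IsLocalRing.ResidueField A) B :=
    IsScalarTower.of_algebraMap_eq fun a => rfl
  have h := nat_bc D ((MvPolynomial.aeval (R := IsLocalRing.ResidueField A) b).restrictScalars A)
    (1 + ∑ i, (MvPolynomial.X i) ⊗ₜ[A] z i)
  rw [law_generic hD z hz, map_one] at h
  rw [h]
  congr 1
  simp [bc_tmul]

theorem law_unit_add [IsLocalRing A] {D : PolyLaw A R} (hD : D.IsMult)
    (x : R) (hx : x ∈ Ring.jacobson R)
    {B : Type u} [CommRing B] [Algebra A B]
    (hB : ∀ a ∈ IsLocalRing.maximalIdeal A, algebraMap A B a = 0) (b : B)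
    (y : B ⊗[A] R) (hy : IsUnit y) : D.toFun B (b ⊗ₜ[A] x + y) = D.toFun B y := by
  obtain ⟨U, rfl⟩ := hy
  obtain ⟨S, hS⟩ := TensorProduct.exists_finset ((U⁻¹ : (B ⊗[A] R)ˣ) : B ⊗[A] R)
  have h1 : b ⊗ₜ[A] x + (U : B ⊗[A] R) =
      U * (1 + ∑ i : S, (i.1.1 * b) ⊗ₜ[A] (i.1.2 * x)) := by
    have : ∑ i : S, (i.1.1 * b) ⊗ₜ[A] (i.1.2 * x) =
        ((U⁻¹ : (B ⊗[A] R)ˣ) : B ⊗[A] R) * b ⊗ₜ[A] x := by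
      rw [hS, Finset.sum_mul, ← Finset.sum_coe_sort S]
      simp
    rw [this, mul_add, mul_one, Units.mul_inv_cancel_left, add_comm]
  rw [h1, (hD B).2, law_special hD _ (fun i => Ideal.mul_mem_left _ _ hx) hB, mul_one]

theorem law_add [IsLocalRing A] {D : PolyLaw A R} (hD : D.IsMult)
    (x : R) (hx : x ∈ Ring.jacobson R)
    {B : Type u} [CommRing B] [Algebra A B]
    (hB : ∀ a ∈ IsLocalRing.maximalIdeal A, algebraMap A B a = 0) (b : B)
    (y : B ⊗[A] R) : D.toFun B (b ⊗ₜ[A] x + y) = D.toFun B y := by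
  have key := law_eq D (B := B)
    ((X * C b) ⊗ₜ[A] x + (1 + (X : B[X]) • bc R (cm A B) (y - 1)))
    (1 + (X : B[X]) • bc R (cm A B) (y - 1)) (fun N => by
      rw [map_add, bc_tmul]
      refine law_unit_add hD x hx ?_ _ _ (isUnit_qm N _)
      intro a ha
      have := ((qm A B N).comp (cm A B)).commutes a
      rw [← this, hB a ha, map_zero]) 1
  simpa [bc_smul, bc_tmul, ev_apply, bc_ev_cm] using key

end dir2

end SympDetAux
section final

open SympDet Polynomial

variable {A : Type u} [CommRing A] {R : Type u} [Ring R] [Algebra A R]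

theorem chPoly_coeff_zero (s : InvAlg A R) (P : PolyLaw A ↥s.plus) (g : A ⊗[A] ↥s.plus) :
    (chPoly P s.onePlus A g).coeff 0 = P.toFun A (-g) := by
  have h := P.natural A[X] A (SympDetAux.ev A (0 : A))
    ((X : A[X]) ⊗ₜ[A] s.onePlus -
      LinearMap.rTensor s.plus (IsScalarTower.toAlgHom A A A[X]).toLinearMap g)
  rw [SympDetAux.ev_apply, ← Polynomial.coeff_zero_eq_eval_zero] at h
  refine h.trans ?_
  congr 1
  rw [map_sub, LinearMap.rTensor_tmul]
  have h1 : (SympDetAux.ev A (0 : A)).toLinearMap (X : A[X]) = 0 := SympDetAux.ev_X (A := A) (0 : A)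
  rw [h1, TensorProduct.zero_tmul, zero_sub, ← LinearMap.comp_apply, ← LinearMap.rTensor_comp]
  have h2 : (SympDetAux.ev A (0 : A)).toLinearMap ∘ₗ
      (IsScalarTower.toAlgHom A A A[X]).toLinearMap = LinearMap.id := by
    ext
    simp
  rw [h2, LinearMap.rTensor_id, LinearMap.id_apply]

theorem left_inv_of_unit (s : InvAlg A R) (d : ℕ) (D : PolyLaw A R) (P : PolyLaw A ↥s.plus)
    (hCH : IsSympCH s d D P) (g : s.plus) (hg : IsUnit (D.toFun A ((1 : A) ⊗ₜ[A] (g : R)))) :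
    ∃ v : R, v * (g : R) = 1 := by
  have hD := hCH.1.1.mult
  let p := chPoly P s.onePlus A ((1 : A) ⊗ₜ[A] g)
  have hp : Polynomial.aeval ((1 : A) ⊗ₜ[A] (g : R)) p = 0 := by
    have := hCH.2 A ((1 : A) ⊗ₜ[A] g)
    simpa [chEval, InvAlg.incl] using this
  have hp' : Polynomial.aeval (g : R) p = 0 := by
    have := congrArg (Algebra.TensorProduct.lid A R) hp
    rw [map_zero, ← AlgEquiv.coe_toAlgHom, ← Polynomial.aeval_algHom_apply] at this
    simpa using this
  have hu : IsUnit (p.coeff 0) := by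
    have h1 : p.coeff 0 = P.toFun A (-((1 : A) ⊗ₜ[A] g)) := chPoly_coeff_zero s P _
    rw [h1, ← isUnit_pow_iff (two_ne_zero), hCH.1.1.sq]
    have h2 : s.incl A (-((1 : A) ⊗ₜ[A] g)) = ((-1 : A) ⊗ₜ[A] (1 : R)) * ((1 : A) ⊗ₜ[A] (g : R)) := by
      rw [Algebra.TensorProduct.tmul_mul_tmul, mul_one, one_mul, TensorProduct.neg_tmul, map_neg]
      simp [InvAlg.incl]
    rw [h2, (hD A).2]
    refine IsUnit.mul ?_ hg
    refine IsUnit.of_mul_eq_one (D.toFun A ((-1 : A) ⊗ₜ[A] (1 : R))) ?_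
    rw [← (hD A).2, Algebra.TensorProduct.tmul_mul_tmul, neg_mul_neg, one_mul, one_mul]
    exact (hD A).1
  obtain ⟨c, hc⟩ := hu.exists_left_inv
  have h3 := congrArg (Polynomial.aeval (g : R)) (Polynomial.divX_mul_X_add p)
  rw [hp', map_add, map_mul, aeval_X, aeval_C] at h3
  refine ⟨-(algebraMap A R c * aeval (g : R) p.divX), ?_⟩
  rw [neg_mul, mul_assoc, eq_neg_of_add_eq_zero_left h3, mul_neg, neg_neg, ← map_mul, hc, map_one]

end final

open SympDet in
theorem stmt_9 {A : Type u} [CommRing A] [IsLocalRing A] {R : Type u} [Ring R] [Algebra A R]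
    (h2 : IsUnit (2 : A)) (s : InvAlg A R) (d : ℕ) (D : PolyLaw A R) (P : PolyLaw A ↥s.plus)
    (hCH : IsSympCH s d D P) :
    ∀ x : R,
      (∀ (B : Type u) [CommRing B] [Algebra A B],
          (∀ a ∈ IsLocalRing.maximalIdeal A, algebraMap A B a = 0) →
            ∀ (b : B) (y : B ⊗[A] R), D.toFun B (b ⊗ₜ[A] x + y) = D.toFun B y) ↔
        x ∈ (⊥ : Ideal R).jacobson := by
  intro x
  have hD := hCH.1.1.mult
  constructor
  · intro h
    rw [Ideal.mem_jacobson_iff]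
    intro y
    let k := IsLocalRing.ResidueField A
    have hk : ∀ a ∈ IsLocalRing.maximalIdeal A, algebraMap A k a = 0 := fun a ha =>
      Ideal.Quotient.eq_zero_iff_mem.2 ha
    have hone : D.toFun k ((1 : k) ⊗ₜ[A] (1 + y * x)) = 1 := by
      apply SympDetAux.one_add_mul hD
      intro B' _ _ f z
      refine h B' (fun a ha => ?_) 1 z
      rw [← f.commutes a, hk a ha, map_zero]
    let g0 : R := s.star (1 + y * x) * (1 + y * x)
    have hg0 : g0 ∈ s.plus := by
      simp [g0, InvAlg.plus, s.star_mul, s.star_star]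
    have hdet : D.toFun k ((1 : k) ⊗ₜ[A] g0) = 1 := by
      have e : (1 : k) ⊗ₜ[A] g0 =
          (LinearMap.lTensor k s.star ((1 : k) ⊗ₜ[A] (1 + y * x))) *
            ((1 : k) ⊗ₜ[A] (1 + y * x)) := by
        rw [LinearMap.lTensor_tmul, Algebra.TensorProduct.tmul_mul_tmul, one_mul]
      rw [e, (hD k).2, hCH.1.1.starInv, hone, one_mul]
    have hunit : IsUnit (D.toFun A ((1 : A) ⊗ₜ[A] g0)) := by
      have e := SympDetAux.nat_bc D (Algebra.ofId A k) ((1 : A) ⊗ₜ[A] g0)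
      rw [SympDetAux.bc_tmul, map_one, hdet] at e
      by_contra hn
      have := hk _ ((IsLocalRing.mem_maximalIdeal _).2 hn)
      exact one_ne_zero (e.symm.trans this)
    obtain ⟨v, hv⟩ := left_inv_of_unit s d D P hCH ⟨g0, hg0⟩ hunit
    refine ⟨v * s.star (1 + y * x), ?_⟩
    rw [Ideal.mem_bot, sub_eq_zero]
    refine Eq.trans ?_ hv
    change _ = v * (s.star (1 + y * x) * (1 + y * x))
    generalize s.star (1 + y * x) = q
    noncomm_ring
  · intro hx B _ _ hB b y
    rw [Ideal.jacobson_bot] at hx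
    exact SympDetAux.law_add hD x hx hB b y
end
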